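/- arXiv:1805.02156 — 3 statements merged into one kernel-verified Lean document; each statement's English description precedes it below -/
import Mathlib

section
/- Let t ≥ 1 and d ≥ 3, and let G be a finite tree of maximum degree at most d. Then the distance-t chromatic number of G is at most τ_t(d), where τ_t(d) = (d(d-1)^{t/2} - 2)/(d-2) if t is even and τ_t(d) = (2(d-1)^{(t+1)/2} - 2)/(d-2) if t is odd. -/
open SimpleGraph

/-- A distance-`t` vertex-colouring with `n` colours: distinct vertices at distance at most
`t` get distinct colours. -/
def DistVertexColorable {V : Type*} (G : SimpleGraph V) (t n : ℕ) : Prop :=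
  ∃ c : V → Fin n, ∀ u v : V, u ≠ v → G.edist u v ≤ (t : ℕ∞) → c u ≠ c v

/-- `τ_t(d)`. -/
def tau (t d : ℕ) : ℕ :=
  if Even t then (d * (d - 1) ^ (t / 2) - 2) / (d - 2)
  else (2 * (d - 1) ^ ((t + 1) / 2) - 2) / (d - 2)

/-!
Root every component of the forest and colour the vertices greedily in order of increasing depth.
A vertex `u` at distance at most `t` from `v` and no deeper than `v` lies within `⌊t / 2⌋` of the
ancestor of `v` that is `⌊t / 2⌋` steps up, or, when `t` is odd, of the edge from this ancestor to
its parent: the path from `u` to one of `v` and the root has to pass through the ancestor. Counting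
layer by layer, the ball of radius `⌊t / 2⌋` around a vertex (around an edge, for odd `t`) has at
most `τ_t(d)` elements, so a free colour is left for `v`.
-/

open Finset

section Tau

variable {d : ℕ}

lemma tau_two_mul (hd : 3 ≤ d) (k : ℕ) :
    tau (2 * k) d = 1 + d * ∑ i ∈ range k, (d - 1) ^ i := by
  obtain ⟨e, rfl⟩ : ∃ e, d = e + 2 := ⟨d - 2, by omega⟩
  have geom := geom_sum_mul_add e k
  simp only [tau, even_two_mul, if_true, Nat.mul_div_cancel_left k two_pos, Nat.add_sub_cancel,
    show e + 2 - 1 = e + 1 from rfl, ← geom]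
  refine Nat.div_eq_of_eq_mul_left (by omega) (Nat.sub_eq_of_eq_add ?_)
  ring

lemma tau_two_mul_add_one (hd : 3 ≤ d) (k : ℕ) :
    tau (2 * k + 1) d = 2 * (1 + (d - 1) * ∑ i ∈ range k, (d - 1) ^ i) := by
  obtain ⟨e, rfl⟩ : ∃ e, d = e + 2 := ⟨d - 2, by omega⟩
  have geom := geom_sum_mul_add e k
  simp only [tau, Nat.not_even_two_mul_add_one, if_false, Nat.add_sub_cancel,
    show (2 * k + 1 + 1) / 2 = k + 1 by omega, show e + 2 - 1 = e + 1 from rfl, pow_succ, ← geom]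
  refine Nat.div_eq_of_eq_mul_left (by omega) (Nat.sub_eq_of_eq_add ?_)
  ring

lemma tau_two_mul_le (hd : 3 ≤ d) (k : ℕ) : tau (2 * k) d ≤ tau (2 * k + 1) d := by
  rw [tau_two_mul hd, tau_two_mul_add_one hd, mul_add, ← mul_assoc]
  gcongr <;> omega

end Tau

section GreedyColoring

variable {V : Type*} {H : SimpleGraph V} {n : ℕ}

theorem colorable_of_encard_lt_of_wellFounded {r : V → V → Prop} (hr : WellFounded r)
    (htotal : ∀ u v, H.Adj u v → r u v ∨ r v u)
    (hcard : ∀ v, {u | H.Adj u v ∧ r u v}.encard < n) : H.Colorable n := by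
  have exists_free_color (v : V) (c : ∀ u, r u v → Fin n) :
      ∃ x, ∀ u (hu : r u v), H.Adj u v → c u hu ≠ x := by
    by_contra! hall
    choose u hu hadj hcu using hall
    have u_injective : u.Injective := fun x y hxy ↦ by grind
    have card_le : (n : ℕ∞) ≤ {u | H.Adj u v ∧ r u v}.encard :=
      calc (n : ℕ∞)
        _ = ENat.card (Fin n) := by simp
        _ ≤ (Set.range u).encard := u_injective.encard_range
        _ ≤ {u | H.Adj u v ∧ r u v}.encard :=
          Set.encard_le_encard (Set.range_subset_iff.2 fun x ↦ ⟨hadj x, hu x⟩)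
    exact (hcard v).not_ge card_le
  choose free hfree using exists_free_color
  let c : V → Fin n := hr.fix free
  have c_ne {u v : V} (huv : r u v) (hadj : H.Adj u v) : c u ≠ c v := by
    rw [show c v = free v fun u _ ↦ c u from hr.fix_eq free v]
    exact hfree v (fun u _ ↦ c u) u huv hadj
  refine ⟨Coloring.mk c fun {u v} hadj ↦ ?_⟩
  exact (htotal u v hadj).elim (c_ne · hadj) fun hvu ↦ (c_ne hvu hadj.symm).symm

theorem colorable_of_encard_lt_of_le {ι : Type*} [LinearOrder ι] [WellFoundedLT ι] (f : V → ι)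
    (hcard : ∀ v, {u | H.Adj u v ∧ f u ≤ f v}.encard < n) : H.Colorable n := by
  -- Ties in `f` are broken by an arbitrary well-order of the vertices
  let r : V → V → Prop := InvImage (Prod.Lex (· < ·) WellOrderingRel) fun v ↦ (f v, v)
  have hr : WellFounded r := InvImage.wf _ IsWellFounded.wf
  refine colorable_of_encard_lt_of_wellFounded hr (fun u v hadj ↦ ?_) fun v ↦ ?_
  · rcases trichotomous_of (Prod.Lex (· < ·) WellOrderingRel) (f u, u) (f v, v) with h | h | h
    · exact Or.inl h
    · exact absurd (Prod.ext_iff.1 h).2 hadj.ne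
    · exact Or.inr h
  · have le_of_r {u : V} (huv : r u v) : f u ≤ f v :=
      (Prod.lex_iff.1 huv).elim le_of_lt fun h ↦ h.1.le
    exact (Set.encard_le_encard fun _ ↦ And.imp_right le_of_r).trans_lt (hcard v)

end GreedyColoring

section Distance

variable {V : Type*} {G : SimpleGraph V} {u v : V}

lemma edist_le_coe_iff {n : ℕ} :
    G.edist u v ≤ n ↔ G.Reachable u v ∧ G.dist u v ≤ n := by
  refine ⟨fun h ↦ ?_, fun ⟨hr, h⟩ ↦ by rw [← hr.coe_dist_eq_edist]; exact_mod_cast h⟩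
  have hr : G.Reachable u v := reachable_of_edist_ne_top (h.trans_lt (ENat.natCast_lt_top n)).ne
  rw [← hr.coe_dist_eq_edist] at h
  exact ⟨hr, by exact_mod_cast h⟩

lemma edist_le_add_one_iff {k : ℕ} :
    G.edist u v ≤ k + 1 ↔ G.edist u v ≤ k ∨ ∃ w, G.edist u w ≤ k ∧ G.Adj w v := by
  constructor
  · intro h
    obtain ⟨hr, hle⟩ := edist_le_coe_iff.1 (by exact_mod_cast h : G.edist u v ≤ (k + 1 : ℕ))
    obtain ⟨p, hp⟩ := hr.symm.exists_walk_length_eq_dist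
    rw [G.dist_comm, ← hp] at hle
    cases p with
    | nil => simp
    | @cons _ w _ hvw q =>
      rw [Walk.length_cons, Nat.add_le_add_iff_right] at hle
      have huw : G.dist u w ≤ k := G.dist_comm ▸ (dist_le q).trans hle
      exact Or.inr ⟨w, edist_le_coe_iff.2 ⟨q.reachable.symm, huw⟩, hvw.symm⟩
  · rintro (h | ⟨w, huw, hwv⟩)
    · exact h.trans le_self_add
    · exact G.edist_triangle.trans (add_le_add huw (edist_eq_one_iff_adj.2 hwv).le)

end Distance

section DistPower

variable {V : Type*} {G : SimpleGraph V} {t n : ℕ}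

/-- The `t`-th power `G^t` of a graph: two vertices are adjacent if they are distinct and at
distance at most `t` in `G`. -/
def distPower (G : SimpleGraph V) (t : ℕ) : SimpleGraph V where
  Adj u v := u ≠ v ∧ G.edist u v ≤ t
  symm := ⟨fun _ _ h ↦ ⟨h.1.symm, G.edist_comm ▸ h.2⟩⟩
  loopless := ⟨fun _ h ↦ h.1 rfl⟩

lemma distVertexColorable_iff_colorable_distPower :
    DistVertexColorable G t n ↔ (distPower G t).Colorable n :=
  ⟨fun ⟨c, hc⟩ ↦ ⟨Coloring.mk c fun {u v} huv ↦ hc u v huv.1 huv.2⟩,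
    fun ⟨c⟩ ↦ ⟨c, fun _ _ hne hle ↦ c.valid ⟨hne, hle⟩⟩⟩

end DistPower

section Thickening

variable {V : Type*} [DecidableEq V] (G : SimpleGraph V) [G.LocallyFinite] (B : Finset V)

/-- The set of vertices at distance at most `k` from the set `B`, as a `Finset`; see
`mem_cthickening`. -/
def cthickening : ℕ → Finset V
  | 0 => B
  | k + 1 => cthickening k ∪ (cthickening k).biUnion fun x ↦ G.neighborFinset x

variable {G B}

lemma mem_cthickening_succ {k : ℕ} {u : V} :
    u ∈ cthickening G B (k + 1) ↔
      u ∈ cthickening G B k ∨ ∃ x ∈ cthickening G B k, G.Adj x u := by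
  simp [cthickening]

lemma cthickening_subset_succ (k : ℕ) : cthickening G B k ⊆ cthickening G B (k + 1) :=
  subset_union_left

lemma mem_cthickening {k : ℕ} {u : V} :
    u ∈ cthickening G B k ↔ ∃ b ∈ B, G.edist b u ≤ k := by
  induction k generalizing u with
  | zero => simp [cthickening]
  | succ k ih =>
    simp only [mem_cthickening_succ, ih, Nat.cast_add_one, edist_le_add_one_iff]
    grind

variable {d : ℕ}

lemma card_neighborFinset_sdiff_le {A : Finset V} {x y : V} (hx : G.degree x ≤ d)
    (hxy : G.Adj x y) (hy : y ∈ A) : #(G.neighborFinset x \ A) ≤ d - 1 :=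
  calc #(G.neighborFinset x \ A)
    _ ≤ #((G.neighborFinset x).erase y) := card_le_card fun z hz ↦ by grind
    _ = G.degree x - 1 := by
      rw [card_erase_of_mem ((G.mem_neighborFinset x y).2 hxy), card_neighborFinset_eq_degree]
    _ ≤ d - 1 := by omega

lemma card_cthickening_one_sdiff_le {m : ℕ} (hB : ∀ b ∈ B, #(G.neighborFinset b \ B) ≤ m) :
    #(cthickening G B 1 \ B) ≤ #B * m := by
  refine (card_le_card ?_).trans (card_biUnion_le_card_mul B (G.neighborFinset · \ B) m hB)
  intro u hu
  simp only [mem_sdiff, mem_biUnion, mem_neighborFinset]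
  grind [mem_cthickening_succ, cthickening]

lemma card_cthickening_succ_sdiff_le (hdeg : ∀ v, G.degree v ≤ d) (k : ℕ) :
    #(cthickening G B (k + 2) \ cthickening G B (k + 1)) ≤
      #(cthickening G B (k + 1) \ cthickening G B k) * (d - 1) := by
  refine (card_le_card (t := (cthickening G B (k + 1) \ cthickening G B k).biUnion
    fun x ↦ G.neighborFinset x \ cthickening G B k) fun u hu ↦ ?_).trans
    (card_biUnion_le_card_mul _ _ _ fun x hx ↦ ?_)
  · simp only [mem_sdiff, mem_biUnion, mem_neighborFinset]
    grind [mem_cthickening_succ]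
  · obtain ⟨y, hy, hyx⟩ : ∃ y ∈ cthickening G B k, G.Adj y x := by
      grind [mem_cthickening_succ]
    exact card_neighborFinset_sdiff_le (hdeg x) hyx.symm hy

lemma card_cthickening_le (hdeg : ∀ v, G.degree v ≤ d) {m : ℕ}
    (hB : ∀ b ∈ B, #(G.neighborFinset b \ B) ≤ m) (k : ℕ) :
    #(cthickening G B k) ≤ #B * (1 + m * ∑ i ∈ range k, (d - 1) ^ i) := by
  have layer_le (k : ℕ) :
      #(cthickening G B (k + 1) \ cthickening G B k) ≤ #B * m * (d - 1) ^ k := by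
    induction k with
    | zero => simpa [cthickening] using card_cthickening_one_sdiff_le hB
    | succ k ih =>
      rw [pow_succ, ← mul_assoc]
      exact (card_cthickening_succ_sdiff_le hdeg k).trans (Nat.mul_le_mul_right _ ih)
  induction k with
  | zero => simp [cthickening]
  | succ k ih =>
    rw [← card_sdiff_add_card_eq_card (cthickening_subset_succ k), sum_range_succ]
    linarith [layer_le k]

lemma card_cthickening_singleton_le (hdeg : ∀ v, G.degree v ≤ d) (a : V) (k : ℕ) :
    #(cthickening G {a} k) ≤ 1 + d * ∑ i ∈ range k, (d - 1) ^ i := by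
  rw [← one_mul (1 + _), ← card_singleton a]
  refine card_cthickening_le hdeg (fun b _ ↦ ?_) k
  exact (card_le_card sdiff_subset).trans ((G.card_neighborFinset_eq_degree b).trans_le (hdeg b))

lemma card_cthickening_pair_le (hdeg : ∀ v, G.degree v ≤ d) {a b : V} (hab : G.Adj a b) (k : ℕ) :
    #(cthickening G {a, b} k) ≤ 2 * (1 + (d - 1) * ∑ i ∈ range k, (d - 1) ^ i) := by
  rw [← card_pair hab.ne]
  refine card_cthickening_le hdeg (fun x hx ↦ ?_) k
  rcases mem_insert.1 hx with rfl | hx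
  · exact card_neighborFinset_sdiff_le (hdeg x) hab (by simp)
  · obtain rfl := mem_singleton.1 hx
    exact card_neighborFinset_sdiff_le (hdeg x) hab.symm (by simp)

end Thickening

section Geodesics

variable {V : Type*} {G : SimpleGraph V} {u v w : V}

lemma dist_getVert_of_length_eq_dist {p : G.Walk u v} (hp : p.length = G.dist u v) {k : ℕ}
    (hk : k ≤ G.dist u v) :
    G.dist u (p.getVert k) = k ∧ G.dist (p.getVert k) v = G.dist u v - k := by
  have htake := length_eq_dist_of_subwalk hp (p.isSubwalk_take k)
  have hdrop := length_eq_dist_of_subwalk hp (p.isSubwalk_drop k)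
  rw [Walk.take_length] at htake
  rw [Walk.drop_length] at hdrop
  omega

lemma dist_add_dist_of_mem_support {p : G.Walk u v} (hp : p.length = G.dist u v)
    (hw : w ∈ p.support) : G.dist u w + G.dist w v = G.dist u v := by
  obtain ⟨k, rfl, hk⟩ := Walk.mem_support_iff_exists_getVert.1 hw
  have := dist_getVert_of_length_eq_dist hp (hp ▸ hk)
  omega

lemma support_subset_support_of_isAcyclic (hG : G.IsAcyclic) {p : G.Walk u v} (hp : p.IsPath)
    (q : G.Walk u v) : p.support ⊆ q.support := by
  classical
  have heq : p = q.bypass :=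
    congrArg Subtype.val ((hG.subsingleton_path u v).elim ⟨p, hp⟩ ⟨q.bypass, q.bypass_isPath⟩)
  exact heq ▸ q.support_bypass_subset_support

lemma dist_add_dist_eq_or_of_isAcyclic (hG : G.IsAcyclic) {r a : V}
    {p : G.Walk v r} (hp : p.IsPath) (ha : a ∈ p.support) (hu : G.Reachable v u) :
    G.dist v a + G.dist a u = G.dist v u ∨ G.dist r a + G.dist a u = G.dist r u := by
  obtain ⟨q, hq⟩ := hu.exists_walk_length_eq_dist
  obtain ⟨s, hs⟩ := (p.reachable.symm.trans hu).exists_walk_length_eq_dist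
  have ha' := support_subset_support_of_isAcyclic hG hp (q.append s.reverse) ha
  rw [Walk.mem_support_append_iff, Walk.support_reverse, List.mem_reverse] at ha'
  exact ha'.imp (dist_add_dist_of_mem_support hq) (dist_add_dist_of_mem_support hs)

end Geodesics

section Forest

variable {V : Type*} {G : SimpleGraph V} {r v : V}

lemma exists_center_of_isAcyclic (hG : G.IsAcyclic) (hvr : G.Reachable v r) (k : ℕ) :
    ∃ a, ∀ u, G.edist v u ≤ (2 * k : ℕ) → G.dist r u ≤ G.dist r v → G.edist a u ≤ k := by
  simp only [edist_le_coe_iff]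
  rcases lt_or_ge (G.dist r v) k with hlt | hk
  · exact ⟨r, fun u hu hdepth ↦ ⟨hvr.symm.trans hu.1, hdepth.trans hlt.le⟩⟩
  rw [G.dist_comm] at hk
  obtain ⟨p, hp⟩ := hvr.exists_walk_length_eq_dist
  have hpath : p.IsPath := p.isPath_of_length_eq_dist hp
  refine ⟨p.getVert k, fun u ⟨hvu, hdist⟩ hdepth ↦ ⟨(p.take k).reachable.symm.trans hvu, ?_⟩⟩
  obtain ⟨hva, har⟩ := dist_getVert_of_length_eq_dist hp hk
  have hbetween := dist_add_dist_eq_or_of_isAcyclic hG hpath (p.getVert_mem_support k) hvu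
  rw [G.dist_comm] at har
  rw [G.dist_comm (u := r) (v := v)] at hdepth
  omega

lemma exists_central_edge_of_isAcyclic (hG : G.IsAcyclic) (hvr : G.Reachable v r) {k : ℕ}
    (hk : k < G.dist v r) :
    ∃ a b, G.Adj a b ∧ ∀ u, G.edist v u ≤ (2 * k + 1 : ℕ) → G.dist r u ≤ G.dist r v →
      G.edist a u ≤ k ∨ G.edist b u ≤ k := by
  simp only [edist_le_coe_iff]
  obtain ⟨p, hp⟩ := hvr.exists_walk_length_eq_dist
  have hpath : p.IsPath := p.isPath_of_length_eq_dist hp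
  have hadj : G.Adj (p.getVert k) (p.getVert (k + 1)) := p.adj_getVert_succ (hp ▸ hk)
  refine ⟨p.getVert k, p.getVert (k + 1), hadj, fun u ⟨hvu, hdist⟩ hdepth ↦ ?_⟩
  have hau : G.Reachable (p.getVert k) u := (p.take k).reachable.symm.trans hvu
  have hbu : G.Reachable (p.getVert (k + 1)) u := (p.take (k + 1)).reachable.symm.trans hvu
  obtain ⟨hva, har⟩ := dist_getVert_of_length_eq_dist hp hk.le
  obtain ⟨hvb, hbr⟩ := dist_getVert_of_length_eq_dist hp (Nat.succ_le_of_lt hk)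
  rw [Nat.succ_eq_add_one] at hvb hbr
  have ha := dist_add_dist_eq_or_of_isAcyclic hG hpath (p.getVert_mem_support k) hvu
  have hb := dist_add_dist_eq_or_of_isAcyclic hG hpath (p.getVert_mem_support (k + 1)) hvu
  -- A priori both distances are only at most `k + 1`, but they differ because `G` is bipartite.
  have hne := hG.dist_ne_of_adj hadj hau.symm
  rw [G.dist_comm (v := r)] at har hbr
  rw [G.dist_comm (u := r) (v := v)] at hdepth
  rw [G.dist_comm (u := u), G.dist_comm (u := u)] at hne
  suffices G.dist (p.getVert k) u ≤ k ∨ G.dist (p.getVert (k + 1)) u ≤ k from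
    this.imp (⟨hau, ·⟩) (⟨hbu, ·⟩)
  omega

variable [G.LocallyFinite] {d : ℕ}

lemma encard_le_tau_of_isAcyclic (hG : G.IsAcyclic) (hd : 3 ≤ d) (hdeg : ∀ v, G.degree v ≤ d)
    (hvr : G.Reachable v r) (t : ℕ) :
    {u | G.edist v u ≤ t ∧ G.dist r u ≤ G.dist r v}.encard ≤ tau t d := by
  classical
  suffices ∃ B k, #(cthickening G B k) ≤ tau t d ∧
      ∀ u, G.edist v u ≤ t → G.dist r u ≤ G.dist r v → ∃ b ∈ B, G.edist b u ≤ k by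
    obtain ⟨B, k, hcard, hB⟩ := this
    calc {u | G.edist v u ≤ t ∧ G.dist r u ≤ G.dist r v}.encard
      _ ≤ (cthickening G B k : Set V).encard :=
        Set.encard_le_encard fun u hu ↦ mem_coe.2 (mem_cthickening.2 (hB u hu.1 hu.2))
      _ ≤ tau t d := by rw [Set.encard_coe_eq_coe_finsetCard]; exact_mod_cast hcard
  obtain ⟨k, rfl | rfl⟩ := t.even_or_odd'
  · obtain ⟨a, ha⟩ := exists_center_of_isAcyclic hG hvr k
    refine ⟨{a}, k, ?_, by simpa using ha⟩
    exact (card_cthickening_singleton_le hdeg a k).trans_eq (tau_two_mul hd k).symm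
  rcases le_or_gt (G.dist v r) k with hle | hk
  · refine ⟨{r}, k, ?_, fun u hvu hdepth ↦ ⟨r, mem_singleton_self r, ?_⟩⟩
    · exact (card_cthickening_singleton_le hdeg r k).trans
        ((tau_two_mul hd k).symm.trans_le (tau_two_mul_le hd k))
    · rw [G.dist_comm] at hle
      exact edist_le_coe_iff.2 ⟨hvr.symm.trans (edist_le_coe_iff.1 hvu).1, hdepth.trans hle⟩
  · obtain ⟨a, b, hab, hcover⟩ := exists_central_edge_of_isAcyclic hG hvr hk
    refine ⟨{a, b}, k, ?_, by simpa using hcover⟩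
    exact (card_cthickening_pair_le hdeg hab k).trans_eq (tau_two_mul_add_one hd k).symm

end Forest

theorem stmt_4_general {V : Type*} (G : SimpleGraph V) [G.LocallyFinite] (t d : ℕ) (hd : 3 ≤ d)
    (hG : G.IsAcyclic) (hdeg : ∀ v, G.degree v ≤ d) : DistVertexColorable G t (tau t d) := by
  rw [distVertexColorable_iff_colorable_distPower]
  let root (v : V) : V := (G.connectedComponentMk v).out
  have reachable_root (v : V) : G.Reachable v (root v) :=
    (ConnectedComponent.exact (Quot.out_eq (G.connectedComponentMk v))).symm
  have root_eq {u v : V} (huv : G.Reachable u v) : root u = root v :=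
    congrArg Quot.out (ConnectedComponent.sound huv)
  refine colorable_of_encard_lt_of_le (fun v ↦ G.dist (root v) v) fun v ↦ ?_
  let S : Set V := {u | G.edist v u ≤ t ∧ G.dist (root v) u ≤ G.dist (root v) v}
  have hcard : S.encard ≤ tau t d := encard_le_tau_of_isAcyclic hG hd hdeg (reachable_root v) t
  have hvS : v ∈ S := by simp [S]
  have hfinite : S.Finite := Set.finite_of_encard_le_coe hcard
  have hsub : {u | (distPower G t).Adj u v ∧ G.dist (root u) u ≤ G.dist (root v) v} ⊆ S \ {v} := by
    rintro u ⟨⟨hne, huv⟩, hdepth⟩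
    rw [root_eq (edist_le_coe_iff.1 huv).1] at hdepth
    exact ⟨⟨G.edist_comm ▸ huv, hdepth⟩, hne⟩
  calc _ ≤ (S \ {v}).encard := Set.encard_le_encard hsub
    _ < S.encard := (hfinite.subset Set.sdiff_subset).encard_lt_encard
      (Set.sdiff_singleton_ssubset.2 hvS)
    _ ≤ tau t d := hcard

/-- Every finite tree of maximum degree at most `d ≥ 3` has distance-`t`
chromatic number at most `τ_t(d)` (for `t ≥ 1`). -/
theorem stmt_4 {V : Type*} [Fintype V] (G : SimpleGraph V) [DecidableRel G.Adj]
    (t d : ℕ) (ht : 1 ≤ t) (hd : 3 ≤ d) (hG : G.IsTree)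
    (hdeg : ∀ v, G.degree v ≤ d) :
    DistVertexColorable G t (tau t d) :=
  stmt_4_general G t d hd hG.isAcyclic hdeg
end

section
/- For odd t ≥ 1 and d ≥ 3, let G be the planar graph obtained from an odd cycle u_1…u_ℓ of length ℓ ≥ t+2 by rooting d−2 copies of the tree T_{(t−1)/2,d} at each cycle vertex. Then the distance-t chromatic number of G satisfies χ_t(G) > τ_t(d). -/
open SimpleGraph

/-- `τ_t(d)` for odd `t`. -/
def tauodd (t d : ℕ) : ℕ := (2 * (d - 1) ^ ((t + 1) / 2) - 2) / (d - 2)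

/-!
Write `t = 2k + 1`, and let `B i` be the set of vertices within distance `k` of the cycle edge
`u i — u (i + 1)`. At least `(d - 1) ^ s` vertices lie at height at most `s ≤ k` above a given
cycle vertex, so `B i` has at least `2 ∑_{s ≤ k} (d - 1) ^ s = τ_t(d)` elements. They are pairwise
at distance at most `t`, hence a colouring with `τ_t(d)` colours uses every colour exactly once on
`B i`. A given vertex lies in as many of the sets `B i` on the side of `u i` as on the side of
`u (i + 1)`, by reflecting the cycle, and therefore in an even number of them. Counting the pairs
`(i, v)` such that `v ∈ B i` has one fixed colour shows that `ℓ` is even.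
-/

theorem tauodd_two_mul_add_one {d : ℕ} (hd : 3 ≤ d) (k : ℕ) :
    tauodd (2 * k + 1) d = 2 * ∑ s ∈ Finset.range (k + 1), (d - 1) ^ s := by
  have hgeom := geom_sum_mul_of_one_le (show 1 ≤ d - 1 by lia) (k + 1)
  have hsub : d - 1 - 1 = d - 2 := by lia
  have hexp : (2 * k + 1 + 1) / 2 = k + 1 := by lia
  rw [hsub] at hgeom
  rw [tauodd, hexp]
  apply Nat.div_eq_of_eq_mul_left (by lia)
  rw [mul_assoc, hgeom, Nat.mul_sub, mul_one]

section Counting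

variable {ι V α : Type*} [Fintype α]

theorem card_filter_color_eq_one [DecidableEq α] {s : Finset V} {c : V → α} (hc : Set.InjOn c s)
    (hs : Fintype.card α ≤ s.card) (a : α) : (s.filter (c · = a)).card = 1 := by
  have himage : s.image c = Finset.univ :=
    Finset.eq_univ_of_card _ <| (Finset.card_le_univ _).antisymm <| by
      rwa [Finset.card_image_of_injOn hc]
  obtain ⟨v, hv, rfl⟩ := Finset.mem_image.1 (himage ▸ Finset.mem_univ a)
  refine Finset.card_eq_one.2 ⟨v, Finset.eq_singleton_iff_unique_mem.2 ⟨by simpa using hv, ?_⟩⟩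
  intro w hw
  rw [Finset.mem_filter] at hw
  exact hc hw.1 hv hw.2

theorem even_card_of_rainbow_of_even_cover [Fintype ι] [DecidableEq V] [Nonempty α]
    (B : ι → Finset V) (c : V → α) (hinj : ∀ i, Set.InjOn c (B i))
    (hcard : ∀ i, Fintype.card α ≤ (B i).card)
    (heven : ∀ v, Even (Finset.univ.filter (v ∈ B ·)).card) : Even (Fintype.card ι) := by
  classical
  obtain ⟨a⟩ := ‹Nonempty α›
  let colorClass : Finset V := (Finset.univ.biUnion B).filter (c · = a)
  have habove (i : ι) : colorClass.bipartiteAbove (fun i v ↦ v ∈ B i) i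
      = (B i).filter (c · = a) := by
    ext v
    simp only [colorClass, Finset.mem_bipartiteAbove, Finset.mem_filter, Finset.mem_biUnion,
      Finset.mem_univ, true_and]
    exact ⟨fun h ↦ ⟨h.2, h.1.2⟩, fun h ↦ ⟨⟨⟨i, h.1⟩, h.2⟩, h.1⟩⟩
  have hcount : Fintype.card ι = ∑ v ∈ colorClass, (Finset.univ.filter (v ∈ B ·)).card := calc
    Fintype.card ι = ∑ i, (colorClass.bipartiteAbove (fun i v ↦ v ∈ B i) i).card := by
      simp only [habove, card_filter_color_eq_one (hinj _) (hcard _), Finset.sum_const,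
        Finset.card_univ, smul_eq_mul, mul_one]
    _ = _ := Finset.sum_card_bipartiteAbove_eq_sum_card_bipartiteBelow _
  rw [hcount]
  exact Finset.even_sum _ fun v _ ↦ heven v

end Counting

/-- If `p` picks a neighbour of every vertex and no edge is picked from both ends, then `v ↦ v p(v)`
is injective into the edges, hence onto when there are at most as many edges as vertices. -/
theorem eq_or_eq_of_adj_of_card_edgeFinset_le {V : Type*} [Fintype V] {G : SimpleGraph V}
    [Fintype G.edgeSet] {p : V → V} (hadj : ∀ v, G.Adj v (p v)) (hne : ∀ v, p (p v) ≠ v)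
    (hcard : G.edgeFinset.card ≤ Fintype.card V) {v w : V} (hvw : G.Adj v w) :
    w = p v ∨ v = p w := by
  let edge : V → G.edgeSet := fun x ↦ ⟨s(x, p x), hadj x⟩
  have hinj : Function.Injective edge := by
    intro x y hxy
    rcases Sym2.eq_iff.1 (congrArg Subtype.val hxy) with ⟨hx, -⟩ | ⟨hx, hy⟩
    · exact hx
    · exact absurd (by rw [hy, ← hx]) (hne x)
  have hbij := hinj.bijective_of_nat_card_le <| by
    rwa [Nat.card_eq_fintype_card, Nat.card_eq_fintype_card, ← edgeFinset_card]
  obtain ⟨x, hx⟩ := hbij.surjective ⟨s(v, w), hvw⟩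
  rcases Sym2.eq_iff.1 (congrArg Subtype.val hx) with ⟨rfl, rfl⟩ | ⟨rfl, rfl⟩
  · exact Or.inl rfl
  · exact Or.inr rfl

section FamilyDist

variable {V ι : Type*} {G : SimpleGraph V} {u : ι → V} {v : V}

/-- The distance in `G` from `v` to the set of vertices listed by `u`. -/
noncomputable def familyDist (G : SimpleGraph V) (u : ι → V) (v : V) : ℕ :=
  ⨅ i, G.dist (u i) v

theorem familyDist_le (i : ι) : familyDist G u v ≤ G.dist (u i) v :=
  ciInf_le' _ i

theorem exists_dist_eq_familyDist [Nonempty ι] (G : SimpleGraph V) (u : ι → V) (v : V) :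
    ∃ i, G.dist (u i) v = familyDist G u v :=
  ciInf_mem fun i ↦ G.dist (u i) v

theorem familyDist_eq_zero_iff [Nonempty ι] (hG : G.Connected) :
    familyDist G u v = 0 ↔ v ∈ Set.range u := by
  constructor
  · intro hv
    obtain ⟨i, hi⟩ := exists_dist_eq_familyDist G u v
    exact ⟨i, hG.dist_eq_zero_iff.1 (hi.trans hv)⟩
  · rintro ⟨i, rfl⟩
    simpa only [dist_self, Nat.le_zero] using familyDist_le (G := G) (u := u) (v := u i) i

theorem exists_adj_familyDist_add_one [Nonempty ι] (hG : G.Connected) (hv : v ∉ Set.range u) :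
    ∃ w, G.Adj v w ∧ familyDist G u w + 1 = familyDist G u v := by
  obtain ⟨i, hi⟩ := exists_dist_eq_familyDist G u v
  obtain ⟨W, hW⟩ := hG.exists_walk_length_eq_dist v (u i)
  cases W with
  | nil => exact absurd ⟨i, rfl⟩ hv
  | @cons _ w _ hvw W =>
    refine ⟨w, hvw, le_antisymm ?_ ?_⟩
    · calc
        familyDist G u w + 1 ≤ G.dist w (u i) + 1 := by
          rw [dist_comm]; gcongr; exact familyDist_le i
        _ ≤ W.length + 1 := by gcongr; exact dist_le W
        _ = familyDist G u v := by rw [← hi, dist_comm, ← hW, Walk.length_cons]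
    · obtain ⟨j, hj⟩ := exists_dist_eq_familyDist G u w
      calc
        familyDist G u v ≤ G.dist (u j) v := familyDist_le j
        _ ≤ G.dist (u j) w + G.dist w v := hG.dist_triangle
        _ = familyDist G u w + 1 := by rw [hj, dist_eq_one_iff_adj.2 hvw.symm]

end FamilyDist

/-- A rooting of the vertices of `G` at the closed walk `u`: every vertex off `u` has a parent one
level lower, and the levels start at `0` on `u`. The parent of `u i` is `u (i + 1)`, so that every
vertex has a parent and, in a unicyclic graph, every edge joins a vertex to its parent. -/
structure CycleRooting {V : Type*} {ℓ : ℕ} (G : SimpleGraph V) (u : ZMod ℓ → V) where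
  parent : V → V
  height : V → ℕ
  adj_parent : ∀ v, G.Adj v (parent v)
  parent_cycle : ∀ i, parent (u i) = u (i + 1)
  height_eq_zero_iff : ∀ v, height v = 0 ↔ v ∈ Set.range u
  height_parent_add_one : ∀ v, v ∉ Set.range u → height (parent v) + 1 = height v

namespace CycleRooting

variable {V : Type*} {ℓ : ℕ} {G : SimpleGraph V} {u : ZMod ℓ → V}

theorem nonempty_of_connected (hG : G.Connected) (hinj : Function.Injective u)
    (hcyc : ∀ i, G.Adj (u i) (u (i + 1))) : Nonempty (CycleRooting G u) := by
  have hparent : ∀ v, ∃ w, G.Adj v w ∧ (∀ i, u i = v → w = u (i + 1)) ∧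
      (v ∉ Set.range u → familyDist G u w + 1 = familyDist G u v) := by
    intro v
    by_cases hv : v ∈ Set.range u
    · obtain ⟨i, rfl⟩ := hv
      exact ⟨u (i + 1), hcyc i, fun j hj ↦ by rw [hinj hj], fun h ↦ absurd ⟨i, rfl⟩ h⟩
    · obtain ⟨w, hvw, hw⟩ := exists_adj_familyDist_add_one hG hv
      exact ⟨w, hvw, fun i hi ↦ absurd ⟨i, hi⟩ hv, fun _ ↦ hw⟩
  choose parent hadj hcycle hheight using hparent
  exact ⟨⟨parent, familyDist G u, hadj, fun i ↦ hcycle _ i rfl,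
    fun v ↦ familyDist_eq_zero_iff hG, hheight⟩⟩

section Parent

variable (R : CycleRooting G u)

theorem height_cycle (i : ZMod ℓ) : R.height (u i) = 0 :=
  (R.height_eq_zero_iff _).2 ⟨i, rfl⟩

theorem parent_parent_ne (hinj : Function.Injective u) (hℓ : 3 ≤ ℓ) (v : V) :
    R.parent (R.parent v) ≠ v := by
  have htwo (i : ZMod ℓ) : i + 1 + 1 ≠ i := by
    rw [add_assoc, Ne, add_eq_left, one_add_one_eq_two, ← Nat.cast_two, ZMod.natCast_eq_zero_iff]
    exact Nat.not_dvd_of_pos_of_lt two_pos hℓ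
  intro hv
  by_cases hcycle : v ∈ Set.range u
  · obtain ⟨i, rfl⟩ := hcycle
    rw [R.parent_cycle, R.parent_cycle] at hv
    exact htwo i (hinj hv)
  have hheight := R.height_parent_add_one v hcycle
  by_cases hparent : R.parent v ∈ Set.range u
  · obtain ⟨i, hi⟩ := hparent
    rw [← hi, R.parent_cycle] at hv
    exact hcycle ⟨i + 1, hv⟩
  · have hheight' := R.height_parent_add_one _ hparent
    rw [hv] at hheight'
    lia

/-- The vertices whose parent is `v`; for `v = u i` they include the cycle vertex `u (i - 1)`. -/
def children [Fintype V] [DecidableEq V] (v : V) : Finset V :=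
  {w | R.parent w = v}

theorem degree_le_card_children_add_one [Fintype V] [DecidableEq V] [DecidableRel G.Adj]
    (hinj : Function.Injective u) (hℓ : 3 ≤ ℓ) (hone : G.edgeFinset.card ≤ Fintype.card V)
    (v : V) : G.degree v ≤ (R.children v).card + 1 := by
  have hsub : G.neighborFinset v ⊆ insert (R.parent v) (R.children v) := by
    intro w hw
    simpa [children, eq_comm] using eq_or_eq_of_adj_of_card_edgeFinset_le R.adj_parent
      (R.parent_parent_ne hinj hℓ) hone ((G.mem_neighborFinset v w).1 hw)
  exact (Finset.card_le_card hsub).trans (Finset.card_insert_le _ _)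

theorem iterate_parent_cycle (i : ZMod ℓ) (n : ℕ) : R.parent^[n] (u i) = u (i + n) := by
  induction n with
  | zero => simp
  | succ n ih => rw [Function.iterate_succ_apply', ih, R.parent_cycle, Nat.cast_succ, add_assoc]

theorem edist_iterate_parent_le (v : V) (n : ℕ) : G.edist v (R.parent^[n] v) ≤ n := by
  induction n with
  | zero => simp
  | succ n ih =>
    rw [Function.iterate_succ_apply', Nat.cast_succ]
    refine G.edist_triangle.trans (add_le_add ih ?_)
    exact (edist_eq_one_iff_adj.2 (R.adj_parent _)).le

theorem exists_iterate_parent_eq (v : V) : ∃ j, R.parent^[R.height v] v = u j := by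
  induction hn : R.height v generalizing v with
  | zero =>
    obtain ⟨j, rfl⟩ := (R.height_eq_zero_iff v).1 hn
    exact ⟨j, rfl⟩
  | succ n ih =>
    have hv : v ∉ Set.range u := fun h ↦ by simp [(R.height_eq_zero_iff v).2 h] at hn
    have := R.height_parent_add_one v hv
    exact ih (R.parent v) (by lia)

/-- The index of the cycle vertex above which `v` hangs. -/
noncomputable def root (v : V) : ZMod ℓ :=
  (R.exists_iterate_parent_eq v).choose

theorem iterate_parent_height (v : V) : R.parent^[R.height v] v = u (R.root v) :=
  (R.exists_iterate_parent_eq v).choose_spec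

theorem root_cycle (hinj : Function.Injective u) (i : ZMod ℓ) : R.root (u i) = i := by
  have h := R.iterate_parent_height (u i)
  rw [R.height_cycle] at h
  exact (hinj h).symm

theorem root_parent (hinj : Function.Injective u) {v : V} (hv : v ∉ Set.range u) :
    R.root (R.parent v) = R.root v := by
  apply hinj
  rw [← R.iterate_parent_height, ← R.iterate_parent_height, ← R.height_parent_add_one v hv,
    Function.iterate_succ_apply]

theorem iterate_parent_height_add (v : V) (n : ℕ) :
    R.parent^[R.height v + n] v = u (R.root v + n) := by
  rw [add_comm, Function.iterate_add_apply, R.iterate_parent_height, R.iterate_parent_cycle]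

theorem dist_root_le (v : V) : G.dist (u (R.root v)) v ≤ R.height v := by
  have h := R.edist_iterate_parent_le v (R.height v)
  rw [R.iterate_parent_height, edist_comm] at h
  exact ENat.toNat_le_of_le_natCast h

end Parent

section Branch

variable [Fintype V] (R : CycleRooting G u)

/-- The vertices at height at most `s` above `u j`. -/
noncomputable def branch (j : ZMod ℓ) (s : ℕ) : Finset V :=
  {v | R.root v = j ∧ R.height v ≤ s}

theorem mem_branch {j : ZMod ℓ} {s : ℕ} {v : V} :
    v ∈ R.branch j s ↔ R.root v = j ∧ R.height v ≤ s := by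
  simp only [branch, Finset.mem_filter, Finset.mem_univ, true_and]

theorem cycle_mem_branch (hinj : Function.Injective u) (j : ZMod ℓ) (s : ℕ) :
    u j ∈ R.branch j s := by
  simp only [mem_branch, R.root_cycle hinj, R.height_cycle, zero_le, true_and]

/-- The vertices with parent in `branch j s` are those of `branch j (s + 1)`, with `u j` traded for
its predecessor `u (j - 1)`. -/
theorem card_parent_mem_branch_le [DecidableEq V] (hinj : Function.Injective u) (j : ZMod ℓ)
    (s : ℕ) : (Finset.univ.filter (R.parent · ∈ R.branch j s)).card
      ≤ (R.branch j (s + 1)).card := by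
  have hsub : Finset.univ.filter (R.parent · ∈ R.branch j s)
      ⊆ insert (u (j - 1)) ((R.branch j (s + 1)).erase (u j)) := by
    intro v hv
    rw [Finset.mem_filter, mem_branch] at hv
    obtain ⟨-, hroot, hheight⟩ := hv
    rw [Finset.mem_insert, Finset.mem_erase, mem_branch]
    by_cases hcycle : v ∈ Set.range u
    · obtain ⟨i, rfl⟩ := hcycle
      rw [R.parent_cycle, R.root_cycle hinj] at hroot
      exact Or.inl (by rw [← hroot, add_sub_cancel_right])
    · have hstep := R.height_parent_add_one v hcycle
      rw [R.root_parent hinj hcycle] at hroot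
      exact Or.inr ⟨fun h ↦ hcycle ⟨j, h.symm⟩, hroot, by lia⟩
  calc
    _ ≤ ((R.branch j (s + 1)).erase (u j)).card + 1 :=
      (Finset.card_le_card hsub).trans (Finset.card_insert_le _ _)
    _ = (R.branch j (s + 1)).card :=
      Finset.card_erase_add_one (R.cycle_mem_branch hinj j (s + 1))

theorem pow_le_card_branch [DecidableEq V] (hinj : Function.Injective u) {m k : ℕ}
    (hchildren : ∀ v, R.height v < k → m ≤ (R.children v).card)
    (j : ZMod ℓ) {s : ℕ} (hs : s ≤ k) : m ^ s ≤ (R.branch j s).card := by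
  induction s with
  | zero => exact Finset.card_pos.2 ⟨u j, R.cycle_mem_branch hinj j 0⟩
  | succ s ih =>
    calc
      m ^ (s + 1) = m ^ s * m := pow_succ m s
      _ ≤ (R.branch j s).card * m := by gcongr; exact ih (by lia)
      _ ≤ ∑ v ∈ R.branch j s, (R.children v).card :=
        Finset.card_nsmul_le_sum _ _ _ fun v hv ↦
          hchildren v (((R.mem_branch.1 hv).2).trans_lt hs)
      _ = (Finset.univ.filter (R.parent · ∈ R.branch j s)).card :=
        Finset.sum_card_fiberwise_eq_card_filter _ _ _
      _ ≤ (R.branch j (s + 1)).card := R.card_parent_mem_branch_le hinj j s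

end Branch

section EdgeBall

variable [Fintype V] [DecidableEq V] (R : CycleRooting G u)

/-- The vertices within `k` steps of the start of the path `u (x 0), u (x 1), …` along the cycle:
`m ≤ k` steps along it, and then at most `k - m` steps up. -/
noncomputable def sweep (k : ℕ) (x : ℕ → ZMod ℓ) : Finset V :=
  (Finset.range (k + 1)).biUnion fun m ↦ R.branch (x m) (k - m)

theorem mem_sweep {k : ℕ} {x : ℕ → ZMod ℓ} {v : V} :
    v ∈ R.sweep k x ↔ ∃ m, R.height v + m ≤ k ∧ R.root v = x m := by
  simp only [sweep, Finset.mem_biUnion, Finset.mem_range, mem_branch]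
  exact exists_congr fun m ↦ by lia

theorem sum_pow_le_card_sweep (hinj : Function.Injective u) {m k : ℕ}
    (hchildren : ∀ v, R.height v < k → m ≤ (R.children v).card)
    {x : ℕ → ZMod ℓ} (hx : Set.InjOn x (Finset.range (k + 1))) :
    ∑ s ∈ Finset.range (k + 1), m ^ s ≤ (R.sweep k x).card := by
  have hdisj : Set.PairwiseDisjoint (Finset.range (k + 1) : Set ℕ)
      fun n ↦ R.branch (x n) (k - n) := by
    intro a ha b hb hab
    refine Finset.disjoint_left.2 fun v hva hvb ↦ hab (hx ha hb ?_)
    rw [← (R.mem_branch.1 hva).1, ← (R.mem_branch.1 hvb).1]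
  calc
    ∑ s ∈ Finset.range (k + 1), m ^ s = ∑ n ∈ Finset.range (k + 1), m ^ (k - n) := by
      rw [← Finset.sum_range_reflect]; simp only [Nat.add_sub_cancel]
    _ ≤ ∑ n ∈ Finset.range (k + 1), (R.branch (x n) (k - n)).card :=
      Finset.sum_le_sum fun n _ ↦ R.pow_le_card_branch hinj hchildren _ (Nat.sub_le k n)
    _ = (R.sweep k x).card := (Finset.card_biUnion hdisj).symm

/-- The ball of radius `k` around the cycle edge `u i — u (i + 1)`: the vertices reached within `k`
steps from `u i` going backwards or from `u (i + 1)` going forwards along the cycle. -/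
noncomputable def edgeBall (k : ℕ) (i : ZMod ℓ) : Finset V :=
  R.sweep k (fun m ↦ i - m) ∪ R.sweep k (fun m ↦ i + 1 + m)

theorem disjoint_sweep {k : ℕ} (hk : 2 * k + 2 ≤ ℓ) (i : ZMod ℓ) :
    Disjoint (R.sweep k (fun m ↦ i - m)) (R.sweep k (fun m ↦ i + 1 + m)) := by
  rw [Finset.disjoint_left]
  intro v hback hfwd
  obtain ⟨m, hm, hroot⟩ := R.mem_sweep.1 hback
  obtain ⟨n, hn, hroot'⟩ := R.mem_sweep.1 hfwd
  have hzero : ((n + 1 + m : ℕ) : ZMod ℓ) = 0 := by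
    push_cast
    linear_combination hroot - hroot'
  rw [ZMod.natCast_eq_zero_iff] at hzero
  exact Nat.not_dvd_of_pos_of_lt (by lia) (by lia) hzero

theorem two_mul_sum_pow_le_card_edgeBall (hinj : Function.Injective u) {m k : ℕ}
    (hk : 2 * k + 2 ≤ ℓ)
    (hchildren : ∀ v, R.height v < k → m ≤ (R.children v).card)
    (i : ZMod ℓ) : 2 * ∑ s ∈ Finset.range (k + 1), m ^ s ≤ (R.edgeBall k i).card := by
  have hcast : Set.InjOn (Nat.cast : ℕ → ZMod ℓ) (Finset.range (k + 1)) := by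
    intro a ha b hb hab
    rw [Finset.coe_range, Set.mem_Iio] at ha hb
    exact Nat.ModEq.eq_of_lt_of_lt ((ZMod.natCast_eq_natCast_iff _ _ _).1 hab)
      (by lia) (by lia)
  rw [edgeBall, Finset.card_union_of_disjoint (R.disjoint_sweep hk i), two_mul]
  exact add_le_add
    (R.sum_pow_le_card_sweep hinj hchildren (sub_right_injective.comp_injOn hcast))
    (R.sum_pow_le_card_sweep hinj hchildren ((add_right_injective (i + 1)).comp_injOn hcast))

theorem edist_le_or_edist_le_of_mem_edgeBall {k : ℕ} {i : ZMod ℓ} {v : V}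
    (hv : v ∈ R.edgeBall k i) : G.edist v (u i) ≤ k ∨ G.edist v (u (i + 1)) ≤ k := by
  rcases Finset.mem_union.1 hv with hback | hfwd
  · obtain ⟨m, hm, hroot⟩ := R.mem_sweep.1 hback
    have h := R.edist_iterate_parent_le v (R.height v + m)
    rw [R.iterate_parent_height_add, hroot, sub_add_cancel] at h
    exact Or.inl (h.trans (Nat.cast_le.2 hm))
  · obtain ⟨m, hm, hroot⟩ := R.mem_sweep.1 hfwd
    right
    calc
      G.edist v (u (i + 1)) ≤ G.edist v (u (R.root v)) + G.edist (u (R.root v)) (u (i + 1)) :=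
        G.edist_triangle
      _ = G.edist v (R.parent^[R.height v] v)
          + G.edist (u (i + 1)) (R.parent^[m] (u (i + 1))) := by
        rw [R.iterate_parent_height, R.iterate_parent_cycle, hroot, edist_comm (u := u (i + 1))]
      _ ≤ R.height v + m :=
        add_le_add (R.edist_iterate_parent_le _ _) (R.edist_iterate_parent_le _ _)
      _ ≤ k := by exact_mod_cast hm

theorem edist_le_of_mem_edgeBall {k : ℕ} {i : ZMod ℓ} {v w : V}
    (hv : v ∈ R.edgeBall k i) (hw : w ∈ R.edgeBall k i) :
    G.edist v w ≤ (2 * k + 1 : ℕ) := by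
  obtain ⟨x, hx, hvx⟩ : ∃ x, (x = u i ∨ x = u (i + 1)) ∧ G.edist v x ≤ k := by
    simpa using R.edist_le_or_edist_le_of_mem_edgeBall hv
  obtain ⟨y, hy, hwy⟩ : ∃ y, (y = u i ∨ y = u (i + 1)) ∧ G.edist w y ≤ k := by
    simpa using R.edist_le_or_edist_le_of_mem_edgeBall hw
  have hadj : G.Adj (u i) (u (i + 1)) := R.parent_cycle i ▸ R.adj_parent (u i)
  have hxy : G.edist x y ≤ 1 := by
    rw [edist_le_one_iff_adj_or_eq]
    rcases hx with rfl | rfl <;> rcases hy with rfl | rfl <;> simp [hadj, hadj.symm]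
  calc
    G.edist v w ≤ G.edist v x + (G.edist x y + G.edist y w) :=
      G.edist_triangle.trans (add_le_add_right G.edist_triangle _)
    _ ≤ k + (1 + k) := by rw [edist_comm (u := y)]; gcongr
    _ = (2 * k + 1 : ℕ) := by push_cast; ring

/-- The reflection `i ↦ 2 * root v - 1 - i` exchanges the two halves of the edge balls. -/
theorem even_card_mem_edgeBall [NeZero ℓ] {k : ℕ} (hk : 2 * k + 2 ≤ ℓ) (v : V) :
    Even (Finset.univ.filter (v ∈ R.edgeBall k ·)).card := by
  let reflect : ZMod ℓ ≃ ZMod ℓ := Equiv.subLeft (2 * R.root v - 1)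
  have hreflect : (Finset.univ.filter fun i ↦ v ∈ R.sweep k (fun m ↦ i - m)).card
      = (Finset.univ.filter fun i ↦ v ∈ R.sweep k (fun m ↦ i + 1 + m)).card := by
    refine Finset.card_equiv reflect fun i ↦ ?_
    simp only [Finset.mem_filter, Finset.mem_univ, true_and, mem_sweep, reflect,
      Equiv.subLeft_apply]
    refine exists_congr fun m ↦ and_congr_right fun _ ↦ ⟨fun h ↦ ?_, fun h ↦ ?_⟩
    · linear_combination -h
    · linear_combination -h
  simp only [edgeBall, Finset.mem_union, Finset.filter_or]
  rw [Finset.card_union_of_disjoint, hreflect]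
  · exact Even.add_self _
  · exact Finset.disjoint_filter.2 fun i _ hi ↦ Finset.disjoint_left.1 (R.disjoint_sweep hk i) hi

end EdgeBall

end CycleRooting

theorem stmt_13_general {V : Type*} [Fintype V] (G : SimpleGraph V) [DecidableRel G.Adj]
    (t d ℓ : ℕ) (ht : Odd t) (hd : 3 ≤ d) (hodd : Odd ℓ) (hℓ : t + 2 ≤ ℓ)
    (u : ZMod ℓ → V) (hinj : Function.Injective u)
    (hcyc : ∀ i : ZMod ℓ, G.Adj (u i) (u (i + 1)))
    (hconn : G.Connected)
    (hone : G.edgeFinset.card = Fintype.card V)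
    (hdeg : ∀ v : V, (∃ i, G.dist (u i) v < (t - 1) / 2) → d ≤ G.degree v) :
    ¬ DistVertexColorable G t (tauodd t d) := by
  classical
  obtain ⟨k, rfl⟩ := ht
  have : NeZero ℓ := ⟨by lia⟩
  obtain ⟨R⟩ := CycleRooting.nonempty_of_connected hconn hinj hcyc
  have hchildren : ∀ v, R.height v < k → d - 1 ≤ (R.children v).card := by
    intro v hv
    have hroot := R.dist_root_le v
    have hdegree := hdeg v ⟨R.root v, by lia⟩
    have hsplit := R.degree_le_card_children_add_one hinj (by lia) hone.le v
    lia
  rintro ⟨c, hc⟩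
  have : Nonempty (Fin (tauodd (2 * k + 1) d)) := ⟨c (u 0)⟩
  have heven : Even (Fintype.card (ZMod ℓ)) := by
    refine even_card_of_rainbow_of_even_cover (R.edgeBall k) c (fun i v hv w hw hvw ↦ ?_)
      (fun i ↦ ?_) (R.even_card_mem_edgeBall (by lia))
    · by_contra hne
      exact hc v w hne (R.edist_le_of_mem_edgeBall hv hw) hvw
    · rw [Fintype.card_fin, tauodd_two_mul_add_one hd]
      exact R.two_mul_sum_pow_le_card_edgeBall hinj (by lia) hchildren i
  rw [ZMod.card] at heven
  exact Nat.not_even_iff_odd.2 hodd heven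

/-- Let `t ≥ 1` be odd, `d ≥ 3`, and let `G` be the planar graph obtained from
an odd cycle `u_1 … u_ℓ` of length `ℓ ≥ t+2` by rooting `d−2` copies of `T_{(t−1)/2,d}` at
each cycle vertex.  (`G` is characterised by: it is connected with exactly one cycle, namely
`u`; each cycle vertex has degree `d` — degree `2` if `(t-1)/2 = 0`, when the rooted trees
are trivial; every vertex is within distance `(t−1)/2` of the cycle; non-cycle vertices at
distance `< (t−1)/2` of the cycle have degree `d` and the remaining ones are leaves.)
Then `χ_t(G) > τ_t(d)`. -/
theorem stmt_13 {V : Type*} [Fintype V] (G : SimpleGraph V) [DecidableRel G.Adj]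
    (t d ℓ : ℕ) (ht : Odd t) (hd : 3 ≤ d) (hodd : Odd ℓ) (hℓ : t + 2 ≤ ℓ)
    (u : ZMod ℓ → V) (hinj : Function.Injective u)
    (hcyc : ∀ i : ZMod ℓ, G.Adj (u i) (u (i + 1)))
    (hconn : G.Connected)
    (hone : G.edgeFinset.card = Fintype.card V)
    (hdegcyc : ∀ i : ZMod ℓ, G.degree (u i) = if (t - 1) / 2 = 0 then 2 else d)
    (hheight : ∀ v : V, ∃ i : ZMod ℓ, G.dist (u i) v ≤ (t - 1) / 2)
    (hinternal : ∀ v : V, (∀ i, v ≠ u i) →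
      (∃ i, G.dist (u i) v < (t - 1) / 2) → G.degree v = d)
    (hleaf : ∀ v : V, (∀ i, v ≠ u i) →
      ¬ (∃ i, G.dist (u i) v < (t - 1) / 2) → G.degree v = 1) :
    ¬ DistVertexColorable G t (tauodd t d) := by
  refine stmt_13_general G t d ℓ ht hd hodd hℓ u hinj hcyc hconn hone fun v ⟨i, hi⟩ ↦ ?_
  by_cases hv : ∃ j, v = u j
  · obtain ⟨j, rfl⟩ := hv
    rw [hdegcyc, if_neg (by lia)]
  · exact (hinternal v (not_exists.1 hv) ⟨i, hi⟩).ge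
end

section
/- Consequently, for every odd t ≥ 1, every d ≥ 3, and every g, there exists a planar graph G of maximum degree d and girth at least g with χ_t(G) > τ_t(d): no finite girth constraint makes the distance-t chromatic number of planar graphs tree-like for odd t. -/
open SimpleGraph

/-- `H` is a minor of `G`. -/
def IsMinorOf {W V : Type*} (H : SimpleGraph W) (G : SimpleGraph V) : Prop :=
  ∃ f : V → Option W,
    (∀ w : W, ∃ v, f v = some w) ∧
    (∀ w : W, (G.induce {v | f v = some w}).Connected) ∧
    (∀ w₁ w₂ : W, H.Adj w₁ w₂ →
      ∃ v₁ v₂, f v₁ = some w₁ ∧ f v₂ = some w₂ ∧ G.Adj v₁ v₂)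

/-- Planarity, via Wagner's theorem: no `K₅` minor and no `K_{3,3}` minor. -/
def IsPlanar {V : Type*} (G : SimpleGraph V) : Prop :=
  ¬ IsMinorOf (completeGraph (Fin 5)) G ∧
  ¬ IsMinorOf (completeBipartiteGraph (Fin 3) (Fin 3)) G

/-!
A graph whose edges are the pairs `{v, p v}` for a function `p` is planar: a connected set
contains at most one vertex `v` with `p v` outside it, and the branch set of one end of each edge
of a minor contains such a vertex, so a minor has at most as many edges as vertices, whereas `K₅`
has `10 > 5` edges and `K₃,₃` has `9 > 6`. A cycle in such a graph is an orbit of `p`.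

Take an odd cycle of length `n` with a copy of a rooted tree hanging at every vertex. Above the
vertices `s = 0, …, t` of a path in the cycle, consider the tree vertices of depth at most
`min s (t - s)`; for odd `t` this is the ball around the middle edge. Its diameter is at most `t`,
so if there are only as many colours as vertices in the ball, then each of its `n` rotations
contains every colour exactly once, and a fixed colour is met `n` times altogether. On the other
hand a tree vertex lies in the ball above position `s` if and only if it does above position
`t - s`, which differs from `s` as `t` is odd, so the colour is met an even number of times.
-/

open Finset Function

section FunctionalGraph

variable {V W : Type*} {p : V → V}

/-- The functional graph of `p`: the pseudoforest in which every vertex is joined to its image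
(fixed points of `p` give no edge). -/
def functionalGraph (p : V → V) : SimpleGraph V := SimpleGraph.fromRel fun u v => p u = v

lemma functionalGraph_adj {u v : V} :
    (functionalGraph p).Adj u v ↔ u ≠ v ∧ (p u = v ∨ p v = u) :=
  SimpleGraph.fromRel_adj _ u v

lemma eq_of_preconnected_of_apply_notMem {B : Set V}
    (hB : ((functionalGraph p).induce B).Preconnected) {a b : V} (ha : a ∈ B) (hb : b ∈ B)
    (hpa : p a ∉ B) (hpb : p b ∉ B) : a = b := by
  let step : B → B → Prop := fun x y => p x = y
  have reaches_a : Relation.ReflTransGen step ⟨b, hb⟩ ⟨a, ha⟩ := by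
    by_contra hba
    obtain ⟨walk⟩ := hB ⟨a, ha⟩ ⟨b, hb⟩
    obtain ⟨⟨⟨x, y⟩, hxy⟩, -, hx, hy⟩ :=
      walk.exists_boundary_dart {v | Relation.ReflTransGen step v ⟨a, ha⟩} .refl hba
    rcases (functionalGraph_adj.1 hxy).2 with hpx | hpy
    · rcases Relation.ReflTransGen.cases_head hx with rfl | ⟨z, hpz, hz⟩
      · exact hpa (hpx ▸ y.2)
      · obtain rfl : y = z := Subtype.ext (hpx.symm.trans hpz)
        exact hy hz
    · exact hy (.head hpy hx)
  rcases Relation.ReflTransGen.cases_head reaches_a with hba | ⟨z, hpz, -⟩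
  · exact (congrArg Subtype.val hba).symm
  · exact absurd (hpz ▸ z.2) hpb

lemma encard_edgeSet_le_of_isMinorOf_functionalGraph {H : SimpleGraph W}
    (h : IsMinorOf H (functionalGraph p)) : H.edgeSet.encard ≤ ENat.card W := by
  obtain ⟨f, -, hconn, hadj⟩ := h
  have exists_exit : ∀ e : H.edgeSet, ∃ w w' v,
      w ≠ w' ∧ f v = some w ∧ f (p v) = some w' ∧ e = s(w, w') := by
    rintro ⟨⟨w, w'⟩, hww' : H.Adj w w'⟩
    obtain ⟨v, v', hv, hv', hvv'⟩ := hadj w w' hww'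
    rcases (functionalGraph_adj.1 hvv').2 with rfl | rfl
    · exact ⟨w, w', v, hww'.ne, hv, hv', rfl⟩
    · exact ⟨w', w, v', hww'.ne', hv', hv, Sym2.eq_swap⟩
  choose source target exitVertex hne hsource htarget hedge using exists_exit
  refine ENat.card_le_card_of_injective (f := source) fun e e' hee' => ?_
  have exit_leaves : ∀ e, p (exitVertex e) ∉ {v | f v = some (source e)} := fun e he =>
    hne e (Option.some.inj (he.symm.trans (htarget e)))
  have hexit : exitVertex e = exitVertex e' :=
    eq_of_preconnected_of_apply_notMem (hconn (source e)).preconnected (hsource e)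
      (hee' ▸ hsource e') (exit_leaves e) (hee' ▸ exit_leaves e')
  have htarget' : target e = target e' :=
    Option.some.inj ((htarget e).symm.trans (hexit ▸ htarget e'))
  exact Subtype.ext (by rw [hedge e, hedge e', hee', htarget'])

theorem isPlanar_functionalGraph (p : V → V) : IsPlanar (functionalGraph p) := by
  constructor <;> intro h <;>
    have hle := encard_edgeSet_le_of_isMinorOf_functionalGraph h
  · have hcard : (completeGraph (Fin 5)).edgeSet.encard = 10 := by
      rw [← SimpleGraph.coe_edgeFinset, Set.encard_coe_eq_coe_finsetCard,
        SimpleGraph.card_edgeFinset_top_eq_card_choose_two]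
      rfl
    rw [hcard, ENat.card_eq_coe_fintype_card, Fintype.card_fin] at hle
    exact absurd hle (by decide)
  · rw [SimpleGraph.encard_edgeSet_completeBipartiteGraph] at hle
    simp only [ENat.card_eq_coe_fintype_card, Fintype.card_sum, Fintype.card_fin] at hle
    exact absurd hle (by decide)

lemma ncard_neighborSet_functionalGraph_le {b : ℕ} {v : V} (hb : (p ⁻¹' {v}).encard ≤ b) :
    ((functionalGraph p).neighborSet v).ncard ≤ b + 1 := by
  have hsub : (functionalGraph p).neighborSet v ⊆ insert (p v) (p ⁻¹' {v}) := fun u hu =>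
    (functionalGraph_adj.1 hu).2.imp Eq.symm id
  have hle : ((functionalGraph p).neighborSet v).encard ≤ (b + 1 : ℕ) :=
    calc ((functionalGraph p).neighborSet v).encard
      _ ≤ (p ⁻¹' {v}).encard + 1 := (Set.encard_le_encard hsub).trans (Set.encard_insert_le _ _)
      _ ≤ (b + 1 : ℕ) := by push_cast; gcongr
  exact ENat.toNat_le_of_le_natCast hle

-- The `w.length` distinct edges of the cycle are of the form `s(v, p v)` with `v` among its
-- at most `w.length` vertices, so every vertex `v` of the cycle contributes `s(v, p v)`.
lemma exists_mapsTo_of_isCycle {a : V} {w : (functionalGraph p).Walk a a} (hw : w.IsCycle) :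
    ∃ S : Finset V, S.Nonempty ∧ #S ≤ w.length ∧ Set.MapsTo p S S := by
  classical
  let S := w.support.tail.toFinset
  have mem_S {v : V} (hv : v ∈ w.support) : v ∈ S := by
    rcases w.mem_support_iff.1 hv with rfl | hv
    · exact List.mem_toFinset.2 (SimpleGraph.Walk.end_mem_tail_support hw.not_nil)
    · exact List.mem_toFinset.2 hv
  have card_S : #S ≤ w.length := (List.toFinset_card_le _).trans (by simp)
  refine ⟨S, ⟨a, mem_S w.start_mem_support⟩, card_S, ?_⟩
  have edges_subset :
      w.edges.toFinset ⊆ {v ∈ S | s(v, p v) ∈ w.edges}.image fun v => s(v, p v) := by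
    rintro ⟨x, y⟩ he
    replace he : s(x, y) ∈ w.edges := List.mem_toFinset.1 he
    rcases (functionalGraph_adj.1 (w.adj_of_mem_edges he)).2 with rfl | rfl
    · exact mem_image.2 ⟨x, mem_filter.2 ⟨mem_S (w.fst_mem_support_of_mem_edges he), he⟩, rfl⟩
    · refine mem_image.2 ⟨y, mem_filter.2 ⟨mem_S (w.snd_mem_support_of_mem_edges he), ?_⟩,
        Sym2.eq_swap⟩
      rwa [Sym2.eq_swap]
  have filter_eq : {v ∈ S | s(v, p v) ∈ w.edges} = S := by
    refine eq_of_subset_of_card_le (filter_subset _ _) ?_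
    calc #S ≤ w.length := card_S
      _ = #w.edges.toFinset := by
        rw [List.toFinset_card_of_nodup hw.edges_nodup, SimpleGraph.Walk.length_edges]
      _ ≤ #{v ∈ S | s(v, p v) ∈ w.edges} := (card_le_card edges_subset).trans card_image_le
  intro v hv
  have hedge : s(v, p v) ∈ w.edges := filter_eq_self.1 filter_eq v hv
  exact mem_S (w.snd_mem_support_of_mem_edges hedge)

lemma le_egirth_functionalGraph {n : ℕ}
    (h : ∀ S : Finset V, S.Nonempty → Set.MapsTo p S S → n ≤ #S) :
    (n : ℕ∞) ≤ (functionalGraph p).egirth := by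
  refine SimpleGraph.le_egirth.2 fun a w hw => ?_
  obtain ⟨S, hne, hcard, hmaps⟩ := exists_mapsTo_of_isCycle hw
  exact_mod_cast (h S hne hmaps).trans hcard

lemma edist_functionalGraph_iterate_le (v : V) (m : ℕ) :
    (functionalGraph p).edist v (p^[m] v) ≤ m := by
  induction m generalizing v with
  | zero => simp
  | succ m ih =>
    have hstep : (functionalGraph p).edist v (p v) ≤ 1 := by
      rw [SimpleGraph.edist_le_one_iff_adj_or_eq, functionalGraph_adj]
      tauto
    calc (functionalGraph p).edist v (p^[m + 1] v)
      _ ≤ (functionalGraph p).edist v (p v) + (functionalGraph p).edist (p v) (p^[m] (p v)) :=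
        SimpleGraph.edist_triangle
      _ ≤ 1 + m := add_le_add hstep (ih (p v))
      _ = (m + 1 : ℕ) := by push_cast; rw [add_comm]

end FunctionalGraph

section TreeCycle

variable {n : ℕ} {X : Type*} [DecidableEq X] {q : X → X} {o : X}

/-- For a rooted tree on `X` with parent map `q` and root `o`, the map whose functional graph is the
cycle `ZMod n` with a copy of the tree hanging at every vertex: the root `(i, o)` of the `i`-th copy
is mapped to the next root, and every other vertex to its parent. The usual convention is `q o = o`,
but the value `q o` does not enter the definition. -/
def treeCycleMap (n : ℕ) (q : X → X) (o : X) (v : ZMod n × X) : ZMod n × X :=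
  if v.2 = o then (v.1 + 1, o) else (v.1, q v.2)

lemma iterate_treeCycleMap_root (i : ZMod n) (m : ℕ) :
    (treeCycleMap n q o)^[m] (i, o) = (i + m, o) := by
  induction m with
  | zero => simp
  | succ m ih => simp [iterate_succ_apply', ih, treeCycleMap, add_assoc]

lemma exists_iterate_treeCycleMap_eq_root {x : X} {s : ℕ} (h : q^[s] x = o) (i : ZMod n) :
    ∃ m ≤ s, (treeCycleMap n q o)^[m] (i, x) = (i, o) := by
  induction s generalizing x with
  | zero => exact ⟨0, le_rfl, Prod.ext rfl h⟩
  | succ s ih =>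
    by_cases hx : x = o
    · exact ⟨0, s.succ.zero_le, Prod.ext rfl hx⟩
    · obtain ⟨m, hm, hroot⟩ := ih h
      refine ⟨m + 1, Nat.succ_le_succ hm, ?_⟩
      rwa [iterate_succ_apply, treeCycleMap, if_neg hx]

lemma encard_preimage_treeCycleMap_le (ho : q o = o) (v : ZMod n × X) :
    (treeCycleMap n q o ⁻¹' {v}).encard ≤ (q ⁻¹' {v.2}).encard := by
  refine Set.encard_le_encard_of_injOn (f := Prod.snd) ?_ ?_
  · rintro ⟨i, x⟩ rfl
    by_cases hx : x = o <;> simp [treeCycleMap, hx, ho]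
  · rintro ⟨i, x⟩ hix ⟨j, y⟩ hjy (rfl : x = y)
    have hij : treeCycleMap n q o (i, x) = treeCycleMap n q o (j, x) := Eq.trans hix hjy.symm
    by_cases hx : x = o <;> simpa [treeCycleMap, hx] using hij

lemma le_egirth_treeCycle [NeZero n] (hq : ∀ x, ∃ s, q^[s] x = o) :
    (n : ℕ∞) ≤ (functionalGraph (treeCycleMap n q o)).egirth := by
  refine le_egirth_functionalGraph fun S ⟨⟨i, x⟩, hix⟩ hS => ?_
  have hroot : (i, o) ∈ S := by
    obtain ⟨s, hs⟩ := hq x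
    obtain ⟨m, -, hm⟩ := exists_iterate_treeCycleMap_eq_root hs i
    exact hm ▸ hS.iterate m hix
  have hroots : ∀ j : ZMod n, (j, o) ∈ S := fun j => by
    have := hS.iterate (j - i).val hroot
    rwa [iterate_treeCycleMap_root, ZMod.natCast_zmod_val, add_sub_cancel] at this
  calc n = #(univ : Finset (ZMod n)) := (ZMod.card n).symm
    _ ≤ #S :=
      card_le_card_of_injOn (·, o) (fun j _ => hroots j) fun _ _ _ _ h => congrArg Prod.fst h

lemma edist_treeCycle_root_le {x : X} {s : ℕ} (h : q^[s] x = o) (i : ZMod n) :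
    (functionalGraph (treeCycleMap n q o)).edist (i, x) (i, o) ≤ s := by
  obtain ⟨m, hms, hm⟩ := exists_iterate_treeCycleMap_eq_root h i
  calc (functionalGraph (treeCycleMap n q o)).edist (i, x) (i, o)
    _ ≤ m := hm ▸ edist_functionalGraph_iterate_le (i, x) m
    _ ≤ s := by exact_mod_cast hms

variable [Fintype X] {t : ℕ}

/-- Index set of the ball above a path of `t + 1` consecutive cycle vertices (for odd `t`, the ball
around the middle edge): `(s, x)` stands for the copy of `x` at the `s`-th vertex of the path, and
`q^[m] x = o` says, when `q o = o`, that `x` has depth at most `m`. -/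
def treeBall (q : X → X) (o : X) (t : ℕ) : Finset (ℕ × X) :=
  {y ∈ range (t + 1) ×ˢ univ | q^[min y.1 (t - y.1)] y.2 = o}

lemma mem_treeBall {y : ℕ × X} :
    y ∈ treeBall q o t ↔ y.1 ≤ t ∧ q^[min y.1 (t - y.1)] y.2 = o := by
  simp [treeBall]

lemma card_treeBall :
    #(treeBall q o t) = ∑ s ∈ range (t + 1), #{x | q^[min s (t - s)] x = o} := by
  simp only [treeBall, card_filter, sum_product]

lemma reflect_mem_treeBall {y : ℕ × X} (hy : y ∈ treeBall q o t) :
    (t - y.1, y.2) ∈ treeBall q o t := by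
  obtain ⟨hyt, hroot⟩ := mem_treeBall.1 hy
  refine mem_treeBall.2 ⟨Nat.sub_le _ _, ?_⟩
  rwa [Nat.sub_sub_self hyt, min_comm]

lemma injOn_treeBall (htn : t < n) (i : ZMod n) :
    Set.InjOn (fun y : ℕ × X => (i + y.1, y.2)) (treeBall q o t) := by
  rintro ⟨s, x⟩ hy ⟨s', x'⟩ hy' h
  have hlt {y : ℕ × X} (hy : y ∈ treeBall q o t) : y.1 < n := (mem_treeBall.1 hy).1.trans_lt htn
  obtain ⟨hs, hx⟩ := Prod.mk.inj h
  exact Prod.ext (CharP.natCast_injOn_Iio (ZMod n) n (hlt hy) (hlt hy') (add_left_cancel hs)) hx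

lemma edist_treeBall_le (i : ZMod n) {y z : ℕ × X} (hy : y ∈ treeBall q o t)
    (hz : z ∈ treeBall q o t) :
    (functionalGraph (treeCycleMap n q o)).edist (i + y.1, y.2) (i + z.1, z.2) ≤ t := by
  wlog hyz : y.1 ≤ z.1 generalizing y z
  · rw [SimpleGraph.edist_comm]
    exact this hz hy (le_of_not_ge hyz)
  obtain ⟨-, hyroot⟩ := mem_treeBall.1 hy
  obtain ⟨hzt, hzroot⟩ := mem_treeBall.1 hz
  set G := functionalGraph (treeCycleMap n q o)
  have hroots : G.edist (i + y.1, o) (i + z.1, o) ≤ (z.1 - y.1 : ℕ) := by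
    have := edist_functionalGraph_iterate_le (p := treeCycleMap n q o) (i + y.1, o) (z.1 - y.1)
    rwa [iterate_treeCycleMap_root, add_assoc, ← Nat.cast_add, Nat.add_sub_cancel' hyz] at this
  calc G.edist (i + y.1, y.2) (i + z.1, z.2)
    _ ≤ G.edist (i + y.1, y.2) (i + y.1, o)
        + (G.edist (i + y.1, o) (i + z.1, o) + G.edist (i + z.1, o) (i + z.1, z.2)) := by
      grw [SimpleGraph.edist_triangle (v := (i + y.1, o)),
        SimpleGraph.edist_triangle (u := (i + y.1, o)) (v := (i + z.1, o))]
    _ ≤ (min y.1 (t - y.1) : ℕ) + ((z.1 - y.1 : ℕ) + (min z.1 (t - z.1) : ℕ)) := by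
      rw [SimpleGraph.edist_comm (u := (i + z.1, o))]
      gcongr
      exacts [edist_treeCycle_root_le hyroot _, edist_treeCycle_root_le hzroot _]
    _ ≤ t := by
      norm_cast
      omega

end TreeCycle

section Coloring

lemma card_filter_eq_one_of_injOn {α κ : Type*} [Fintype κ] [DecidableEq κ] {f : α → κ}
    {s : Finset α} (hf : Set.InjOn f s) (hs : #s = Fintype.card κ) (a : κ) :
    #{x ∈ s | f x = a} = 1 := by
  have hsurj : Set.SurjOn f s (univ : Finset κ) :=
    surjOn_of_injOn_of_card_le f (fun _ _ => mem_coe.2 (mem_univ _)) hf hs.ge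
  obtain ⟨x, hx, rfl⟩ := hsurj (mem_coe.2 (mem_univ a))
  refine card_eq_one.2 ⟨x, ?_⟩
  ext y
  rw [mem_filter, mem_singleton]
  exact ⟨fun hy => hf hy.1 hx hy.2, by rintro rfl; exact ⟨hx, rfl⟩⟩

variable {n t : ℕ} {X : Type*} [DecidableEq X] [Fintype X] {q : X → X} {o : X}

lemma even_sum_treeBall (ht : Odd t) (f : X → ℕ) : Even (∑ y ∈ treeBall q o t, f y.2) := by
  rw [← ZMod.natCast_eq_zero_iff_even, Nat.cast_sum]
  refine sum_involution (fun y _ => (t - y.1, y.2)) (fun y _ => CharTwo.add_self_eq_zero _)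
    (fun y _ _ hfixed => ?_) (fun y hy => reflect_mem_treeBall hy) (fun y hy => ?_)
  · have hself : t - y.1 = y.1 := congrArg Prod.fst hfixed
    obtain ⟨k, rfl⟩ := ht
    omega
  · exact Prod.ext (Nat.sub_sub_self (mem_treeBall.1 hy).1) rfl

theorem not_distVertexColorable_treeCycle (hn : Odd n) (ht : Odd t) (htn : t < n) {N : ℕ}
    (hN : #(treeBall q o t) = N) :
    ¬ DistVertexColorable (functionalGraph (treeCycleMap n q o)) t N := by
  rintro ⟨c, hc⟩
  have : NeZero n := ⟨hn.pos.ne'⟩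
  let c₀ := c (0, o)
  have hball : ∀ i : ZMod n, #{y ∈ treeBall q o t | c (i + y.1, y.2) = c₀} = 1 := fun i =>
    card_filter_eq_one_of_injOn (f := fun y => c (i + y.1, y.2))
      (fun y hy z hz hcyz => by
        by_contra hne
        exact hc _ _ ((injOn_treeBall htn i).ne hy hz hne) (edist_treeBall_le i hy hz) hcyz)
      (hN.trans (Fintype.card_fin N).symm) c₀
  have hcount : n = ∑ y ∈ treeBall q o t, #{i : ZMod n | c (i, y.2) = c₀} :=
    calc n = ∑ i : ZMod n, #{y ∈ treeBall q o t | c (i + y.1, y.2) = c₀} := by simp [hball]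
      _ = ∑ y ∈ treeBall q o t, #{i : ZMod n | c (i + y.1, y.2) = c₀} :=
        sum_card_bipartiteAbove_eq_sum_card_bipartiteBelow
          fun (i : ZMod n) (y : ℕ × X) => c (i + y.1, y.2) = c₀
      _ = ∑ y ∈ treeBall q o t, #{i : ZMod n | c (i, y.2) = c₀} :=
        sum_congr rfl fun y _ => card_equiv (Equiv.addRight (y.1 : ZMod n)) (by simp)
  refine Nat.not_even_iff_odd.2 hn ?_
  rw [hcount]
  exact even_sum_treeBall ht fun x => #{i | c (i, x) = c₀}

end Coloring

section Heap

variable {b k : ℕ}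

lemma sum_pow_min_eq_tauodd (hb : 2 ≤ b) (k : ℕ) :
    ∑ s ∈ range (2 * k + 1 + 1), b ^ min s (2 * k + 1 - s) = tauodd (2 * k + 1) (b + 1) := by
  have hleft : ∑ s ∈ range (k + 1), b ^ min s (2 * k + 1 - s) = ∑ s ∈ range (k + 1), b ^ s :=
    sum_congr rfl fun s hs => by grind
  have hright : ∑ s ∈ range (k + 1), b ^ min (k + 1 + s) (2 * k + 1 - (k + 1 + s))
      = ∑ s ∈ range (k + 1), b ^ s := by
    rw [← sum_range_reflect]
    exact sum_congr rfl fun s hs => by grind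
  calc ∑ s ∈ range (2 * k + 1 + 1), b ^ min s (2 * k + 1 - s)
    _ = 2 * ∑ s ∈ range (k + 1), b ^ s := by
      rw [show 2 * k + 1 + 1 = (k + 1) + (k + 1) by ring, sum_range_add, hleft, hright, two_mul]
    _ = 2 * (b ^ (k + 1) - 1) / (b - 1) := by
      rw [Nat.geomSum_eq hb, Nat.mul_div_assoc _ (Nat.sub_one_dvd_pow_sub_one b (k + 1))]
    _ = tauodd (2 * k + 1) (b + 1) := by
      rw [tauodd, show (2 * k + 1 + 1) / 2 = k + 1 by omega, Nat.mul_sub]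
      rfl

/-- The parent map of the tree of depth `k` whose root has `b - 1` children and whose other inner
vertices have `b` children. The vertices are the numbers with at most `k` digits in base `b`, the
root is `0`, and the parent map deletes the last digit, so `x` has depth at most `s` if and only if
`x < b ^ s`. -/
def heapParent (b k : ℕ) (x : Fin (b ^ k)) : Fin (b ^ k) :=
  ⟨x / b, (Nat.div_le_self _ _).trans_lt x.2⟩

lemma val_iterate_heapParent (s : ℕ) (x : Fin (b ^ k)) :
    ((heapParent b k)^[s] x : ℕ) = x / b ^ s := by
  induction s with
  | zero => simp
  | succ s ih =>
    calc ((heapParent b k)^[s + 1] x : ℕ)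
      _ = (heapParent b k)^[s] x / b := by rw [iterate_succ_apply', heapParent]
      _ = x / b ^ (s + 1) := by rw [ih, Nat.div_div_eq_div_mul, pow_succ]

lemma encard_preimage_heapParent_le (hb : 0 < b) (y : Fin (b ^ k)) :
    (heapParent b k ⁻¹' {y}).encard ≤ b := by
  calc (heapParent b k ⁻¹' {y}).encard
    _ ≤ (Set.Iio b).encard := by
      refine Set.encard_le_encard_of_injOn (f := fun x => x % b) (fun x _ => Nat.mod_lt _ hb) ?_
      intro x hx x' hx' (hmod : (x : ℕ) % b = x' % b)
      have hdiv : (x : ℕ) / b = x' / b := congrArg Fin.val (Eq.trans hx hx'.symm)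
      exact Fin.ext (by rw [← Nat.div_add_mod x b, ← Nat.div_add_mod x' b, hdiv, hmod])
    _ = b := by rw [← coe_range, Set.encard_coe_eq_coe_finsetCard, card_range]

variable [NeZero b]

lemma iterate_heapParent_eq_zero_iff {s : ℕ} {x : Fin (b ^ k)} :
    (heapParent b k)^[s] x = 0 ↔ (x : ℕ) < b ^ s := by
  rw [Fin.ext_iff, val_iterate_heapParent, Fin.val_zero, Nat.div_eq_zero_iff_lt (NeZero.pos _)]

lemma card_iterate_heapParent_eq_zero {s : ℕ} (hs : s ≤ k) :
    #{x : Fin (b ^ k) | (heapParent b k)^[s] x = 0} = b ^ s := by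
  simp only [iterate_heapParent_eq_zero_iff]
  rw [Fin.card_filter_val_lt, min_eq_right (Nat.pow_le_pow_right (NeZero.pos b) hs)]

lemma card_treeBall_heapParent (hb : 2 ≤ b) (k : ℕ) :
    #(treeBall (heapParent b k) 0 (2 * k + 1)) = tauodd (2 * k + 1) (b + 1) := by
  rw [card_treeBall, ← sum_pow_min_eq_tauodd hb]
  exact sum_congr rfl fun s _ => card_iterate_heapParent_eq_zero (by omega)

end Heap

/-- For every odd `t ≥ 1`, every `d ≥ 3` and every `g`, there is a finite
planar graph of maximum degree at most `d` and girth at least `g` with `χ_t > τ_t(d)`: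
no finite girth constraint makes the distance-`t` chromatic number of planar graphs
tree-like for odd `t`. -/
theorem stmt_14 (t d g : ℕ) (ht : Odd t) (hd : 3 ≤ d) :
    ∃ (V : Type) (_ : Finite V) (G : SimpleGraph V),
      IsPlanar G ∧ (∀ v, (G.neighborSet v).ncard ≤ d) ∧ (g : ℕ∞) ≤ G.egirth ∧
      ¬ DistVertexColorable G t (tauodd t d) := by
  obtain ⟨k, rfl⟩ := ht
  obtain ⟨b, rfl⟩ : ∃ b, d = b + 1 := ⟨d - 1, by omega⟩
  have hb : 2 ≤ b := by omega
  have : NeZero b := ⟨by omega⟩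
  let n := 2 * (k + g + 1) + 1
  refine ⟨ZMod n × Fin (b ^ k), inferInstance, functionalGraph (treeCycleMap n (heapParent b k) 0),
    isPlanar_functionalGraph _, fun v => ?_, ?_, ?_⟩
  · have hroot : heapParent b k 0 = 0 := Fin.ext (Nat.zero_div b)
    exact ncard_neighborSet_functionalGraph_le <|
      (encard_preimage_treeCycleMap_le hroot v).trans (encard_preimage_heapParent_le (by omega) v.2)
  · calc (g : ℕ∞) ≤ n := by exact_mod_cast (by omega : g ≤ n)
      _ ≤ _ := le_egirth_treeCycle fun x => ⟨k, iterate_heapParent_eq_zero_iff.2 x.2⟩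
  · exact not_distVertexColorable_treeCycle (odd_two_mul_add_one _) (odd_two_mul_add_one k)
      (by omega) (card_treeBall_heapParent hb k)
end
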